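/- Let R be a commutative noetherian ring, S a faithfully flat R-algebra, and N an R-module of finite injective dimension. If Hom_R(S,N) is an injective R-module and Ext_R^n(S,N) = 0 for all n > 0, then N is an injective R-module. -/

import Mathlib

/-!
Common definitions: `extmod R M N n` is the `n`-th Ext module `Ext_R^n(M,N)`.
-/

open CategoryTheory

universe u

/-- `Ext_R^n(M,N)`, the `n`-th Ext of the `R`-modules `M` and `N`, as an object of
`ModuleCat R`. -/
noncomputable def extmod (R : Type u) [CommRing R] (M N : Type u) [AddCommGroup M] [Module R M]
    [AddCommGroup N] [Module R N] (n : ℕ) : ModuleCat.{u} R :=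
  ((Ext R (ModuleCat.{u} R) n).obj (Opposite.op (ModuleCat.of R M))).obj (ModuleCat.of R N)

/-- The `R`-module `M` admits a projective resolution `P` with `P_m = 0` for all `m > j`;
i.e. `M` has projective dimension at most `j`. -/
def projResBddAbove (R : Type u) [CommRing R] (M : ModuleCat.{u} R) (j : ℕ) : Prop :=
  ∃ P : ProjectiveResolution M, ∀ m : ℕ, j < m → Limits.IsZero (P.complex.X m)

/-- The `R`-module `N` admits an injective resolution `I` with `I^m = 0` for all `m > j`;
i.e. `N` has injective dimension at most `j`. -/
def injResBddAbove (R : Type u) [CommRing R] (N : ModuleCat.{u} R) (j : ℤ) : Prop :=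
  ∃ I : InjectiveResolution N, ∀ m : ℕ, j < (m : ℤ) → Limits.IsZero (I.cocomplex.X m)

/-!
Embed `N` in an injective module `I` with cokernel `Q`. Since `Ext¹(S, N) = 0` and `Hom(S, N)` is
injective, `0 → Hom(S, N) → Hom(S, I) → Hom(S, Q) → 0` is a split exact sequence; hence
`Hom(S, Q)` is injective, and `Q` satisfies the hypotheses on `N` with a smaller injective
dimension, so `Q` is injective by induction. By faithful flatness `Q` embeds in `S ⊗ Q`, and
injectivity of `Q` provides a retraction `S ⊗ Q → Q`, i.e. a map `Q → Hom(S, Q)` splitting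
evaluation at `1`. Composing it with `Hom(S, Q) → Hom(S, I)` and evaluation at `1` splits `I → Q`,
so `N` is a direct summand of `I`.
-/

open TensorProduct

universe v w

section Module

variable {R : Type u} [Ring R] {N I : Type v} {Q : Type*} [AddCommGroup N]
  [Module R N] [AddCommGroup I] [Module R I] [AddCommGroup Q] [Module R Q]

theorem module_injective_of_retraction (hI : Module.Injective R I) {i : N →ₗ[R] I} {r : I →ₗ[R] N}
    (hri : r ∘ₗ i = LinearMap.id) : Module.Injective R N where
  out X Y _ _ _ _ f hf g := by
    obtain ⟨k, hk⟩ := hI.out f hf (i ∘ₗ g)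
    exact ⟨r ∘ₗ k, fun x ↦ by simpa [hk] using LinearMap.congr_fun hri (g x)⟩

theorem exists_section_iff_exists_retraction {i : N →ₗ[R] I} {p : I →ₗ[R] Q}
    (hi : Function.Injective i) (hip : Function.Exact i p) (hp : Function.Surjective p) :
    (∃ s, p ∘ₗ s = LinearMap.id) ↔ ∃ r, r ∘ₗ i = LinearMap.id :=
  (hip.split_tfae hi hp).out 0 1

theorem exists_section_of_module_injective (hN : Module.Injective R N) {i : N →ₗ[R] I}
    {p : I →ₗ[R] Q} (hi : Function.Injective i) (hip : Function.Exact i p)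
    (hp : Function.Surjective p) : ∃ s : Q →ₗ[R] I, p ∘ₗ s = LinearMap.id := by
  obtain ⟨r, hr⟩ := hN.out i hi LinearMap.id
  exact (exists_section_iff_exists_retraction hi hip hp).mpr ⟨r, LinearMap.ext hr⟩

theorem module_injective_of_exact_of_section (hI : Module.Injective R I) {i : N →ₗ[R] I}
    {p : I →ₗ[R] Q} (hi : Function.Injective i) (hip : Function.Exact i p) {s : Q →ₗ[R] I}
    (hs : p ∘ₗ s = LinearMap.id) : Module.Injective R N := by
  have hp : Function.Surjective p := fun x ↦ ⟨s x, LinearMap.congr_fun hs x⟩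
  obtain ⟨r, hr⟩ := (exists_section_iff_exists_retraction hi hip hp).mp ⟨s, hs⟩
  exact module_injective_of_retraction hI hr

end Module

section Hom

variable {R : Type*} [CommRing R] (M : Type*) [AddCommGroup M] [Module R M]
  {N I Q : Type*} [AddCommGroup N] [Module R N] [AddCommGroup I] [Module R I]
  [AddCommGroup Q] [Module R Q]

theorem compRight_injective {i : N →ₗ[R] I} (hi : Function.Injective i) :
    Function.Injective (i.compRight R (M := M)) :=
  fun _ _ h ↦ LinearMap.ext fun m ↦ hi (LinearMap.congr_fun h m)

theorem exact_compRight {i : N →ₗ[R] I} {p : I →ₗ[R] Q} (hi : Function.Injective i)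
    (hip : Function.Exact i p) :
    Function.Exact (i.compRight R (M := M)) (p.compRight R) := by
  refine fun f ↦ ⟨fun hf ↦ ?_, ?_⟩
  · have hrange (m : M) : f m ∈ LinearMap.range i := (hip (f m)).mp (LinearMap.congr_fun hf m)
    exact ⟨f.codRestrictOfInjective i hi hrange, LinearMap.codRestrictOfInjective_comp ..⟩
  · rintro ⟨g, rfl⟩
    exact LinearMap.ext fun m ↦ hip.apply_apply_eq_zero (g m)

end Hom

section Flat

variable {R : Type u} [CommRing R]

theorem module_injective_linearMap_of_flat (M I : Type v) [AddCommGroup M] [Module R M]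
    [Module.Flat R M] [AddCommGroup I] [Module R I] (hI : Module.Injective R I) :
    Module.Injective R (M →ₗ[R] I) where
  out X Y _ _ _ _ f hf g := by
    obtain ⟨k, hk⟩ := hI.out (f.rTensor M)
      (Module.Flat.rTensor_preserves_injective_linearMap f hf) (TensorProduct.lift g)
    exact ⟨TensorProduct.curry k, fun x ↦ LinearMap.ext fun m ↦ by simpa using hk (x ⊗ₜ m)⟩

-- Mathlib's `Module.FaithfullyFlat.tensorProduct_mk_injective` assumes that `S` is commutative.
theorem one_tmul_injective_of_faithfullyFlat (S M : Type*) [Ring S] [Algebra R S]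
    [Module.FaithfullyFlat R S] [AddCommGroup M] [Module R M] :
    Function.Injective (TensorProduct.mk R S M 1) := by
  rw [← Module.FaithfullyFlat.lTensor_injective_iff_injective R S]
  let multiply : S ⊗[R] (S ⊗[R] M) →ₗ[R] S ⊗[R] M :=
    (LinearMap.mul' R S).rTensor M ∘ₗ (TensorProduct.assoc R S S M).symm
  have hmultiply : multiply ∘ₗ (TensorProduct.mk R S M 1).lTensor S = LinearMap.id :=
    TensorProduct.ext' fun s m ↦ by simp [multiply]
  exact Function.LeftInverse.injective (g := multiply) (LinearMap.congr_fun hmultiply)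

theorem exists_section_of_section_compRight (S : Type v) [Ring S] [Algebra R S]
    [Module.FaithfullyFlat R S] {Q : Type v} [AddCommGroup Q] [Module R Q]
    {I : Type*} [AddCommGroup I] [Module R I]
    (hQ : Module.Injective R Q) {p : I →ₗ[R] Q} {σ : (S →ₗ[R] Q) →ₗ[R] S →ₗ[R] I}
    (hσ : p.compRight R ∘ₗ σ = LinearMap.id) :
    ∃ s : Q →ₗ[R] I, p ∘ₗ s = LinearMap.id := by
  obtain ⟨r, hr⟩ := hQ.out (TensorProduct.mk R S Q 1) (one_tmul_injective_of_faithfullyFlat S Q)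
    LinearMap.id
  let evalSection : Q →ₗ[R] S →ₗ[R] Q := (TensorProduct.curry r).flip
  refine ⟨LinearMap.applyₗ 1 ∘ₗ σ ∘ₗ evalSection, LinearMap.ext fun x ↦ ?_⟩
  calc p (σ (evalSection x) 1) = evalSection x 1 :=
        LinearMap.congr_fun (LinearMap.congr_fun hσ (evalSection x)) 1
    _ = x := hr x

end Flat

section Ext

variable {C : Type u} [Category.{v} C] [Abelian C]

theorem hasInjectiveDimensionLT_of_injectiveResolution {X : C} (I : InjectiveResolution X) {n : ℕ}
    (hI : ∀ m, n ≤ m → Limits.IsZero (I.cocomplex.X m)) : HasInjectiveDimensionLT X n := by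
  have := HasExt.standard C
  refine HasInjectiveDimensionLT.mk fun m hm Y e ↦ ?_
  obtain ⟨f, hf, rfl⟩ := I.extMk_surjective e (m + 1) rfl
  obtain rfl : f = 0 := (hI m hm).eq_of_tgt _ _
  exact I.extMk_zero _ _

variable [HasExt.{w} C]

theorem exists_comp_eq_of_subsingleton_ext_one {T : ShortComplex C} (hT : T.ShortExact) {X : C}
    (hX : Subsingleton (Abelian.Ext X T.X₁ 1)) (f : X ⟶ T.X₃) : ∃ g : X ⟶ T.X₂, g ≫ T.g = f := by
  obtain ⟨x, hx⟩ := Abelian.Ext.covariant_sequence_exact₃ X hT (Abelian.Ext.mk₀ f) (zero_add 1)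
    (Subsingleton.elim _ _)
  obtain ⟨g, rfl⟩ := Abelian.Ext.homEquiv₀.symm.surjective x
  rw [Abelian.Ext.homEquiv₀_symm_apply, Abelian.Ext.mk₀_comp_mk₀] at hx
  exact ⟨g, (Abelian.Ext.mk₀_bijective _ _).injective hx⟩

theorem subsingleton_ext_X₃ {T : ShortComplex C} (hT : T.ShortExact) {X : C} {n : ℕ}
    (h₂ : Subsingleton (Abelian.Ext X T.X₂ n)) (h₁ : Subsingleton (Abelian.Ext X T.X₁ (n + 1))) :
    Subsingleton (Abelian.Ext X T.X₃ n) := by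
  refine subsingleton_of_forall_eq 0 fun y ↦ ?_
  obtain ⟨x, rfl⟩ := Abelian.Ext.covariant_sequence_exact₃ X hT y rfl (Subsingleton.elim _ _)
  rw [Subsingleton.elim x 0, Abelian.Ext.zero_comp]

theorem subsingleton_ext_succ_of_isZero (R : Type*) [Ring R] [Linear R C] [EnoughProjectives C]
    {X Y : C} {n : ℕ} (h : Limits.IsZero (((Ext R C (n + 1)).obj (Opposite.op X)).obj Y)) :
    Subsingleton (Abelian.Ext X Y (n + 1)) := by
  let P := projectiveResolution X
  have hexact : (P.complex.linearYonedaObj R Y).ExactAt (n + 1) :=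
    (HomologicalComplex.exactAt_iff_isZero_homology _ _).mpr (h.of_iso (P.isoExt (n + 1) Y).symm)
  rw [HomologicalComplex.exactAt_iff' _ n (n + 1) (n + 2) (by simp) (by simp),
    ShortComplex.moduleCat_exact_iff] at hexact
  refine subsingleton_of_forall_eq 0 fun e ↦ ?_
  obtain ⟨f, hf, rfl⟩ := P.extMk_surjective e (n + 2) rfl
  exact (P.extMk_eq_zero_iff f _ rfl hf n rfl).mpr (hexact f hf)

end Ext

section Cosyzygy

variable {R : Type u} [CommRing R] [Small.{v} R]

theorem exists_section_compRight {T : ShortComplex (ModuleCat.{v} R)} (hT : T.ShortExact)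
    (M : Type v) [AddCommGroup M] [Module R M] (hM : Module.Injective R (M →ₗ[R] T.X₁))
    (hext : Subsingleton (Abelian.Ext (ModuleCat.of R M) T.X₁ 1)) :
    ∃ σ : (M →ₗ[R] T.X₃) →ₗ[R] M →ₗ[R] T.X₂, T.g.hom.compRight R ∘ₗ σ = LinearMap.id := by
  have hexact : Function.Exact T.f.hom T.g.hom :=
    (ShortComplex.ShortExact.moduleCat_exact_iff_function_exact T).mp hT.exact
  refine exists_section_of_module_injective hM (compRight_injective M hT.moduleCat_injective_f)
    (exact_compRight M hT.moduleCat_injective_f hexact) fun f ↦ ?_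
  obtain ⟨g, hg⟩ := exists_comp_eq_of_subsingleton_ext_one hT hext (ModuleCat.ofHom f)
  exact ⟨g.hom, congrArg ModuleCat.Hom.hom hg⟩

theorem module_injective_of_hasInjectiveDimensionLE (S : Type v) [Ring S] [Algebra R S]
    [Module.FaithfullyFlat R S] (d : ℕ) (N : ModuleCat.{v} R) (hN : HasInjectiveDimensionLE N d)
    (hhom : Module.Injective R (S →ₗ[R] N))
    (hext : ∀ n, Subsingleton (Abelian.Ext (ModuleCat.of R S) N (n + 1))) :
    Module.Injective R N := by
  induction d generalizing N with
  | zero =>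
    exact (Module.injective_iff_injective_object R N).mpr
      (injective_iff_hasInjectiveDimensionLT_one.mpr hN)
  | succ d ih =>
    let T : ShortComplex (ModuleCat.{v} R) :=
      ShortComplex.mk (Injective.ι N) (Limits.cokernel.π (Injective.ι N))
        (Limits.cokernel.condition _)
    have hT : T.ShortExact :=
      { exact := ShortComplex.exact_cokernel _
        mono_f := inferInstanceAs (Mono (Injective.ι N))
        epi_g := inferInstanceAs (Epi (Limits.cokernel.π (Injective.ι N))) }
    have hI : Injective T.X₂ := inferInstanceAs (Injective (Injective.under N))
    have hI' : Module.Injective R T.X₂ := (Module.injective_iff_injective_object R T.X₂).mpr hI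
    obtain ⟨σ, hσ⟩ := exists_section_compRight hT S hhom (hext 0)
    have hQ : Module.Injective R T.X₃ := by
      refine ih T.X₃ ((hT.hasInjectiveDimensionLT_X₃_iff d hI).mpr hN) ?_ fun n ↦ ?_
      · exact module_injective_of_retraction (module_injective_linearMap_of_flat S T.X₂ hI') hσ
      · exact subsingleton_ext_X₃ hT (Abelian.Ext.subsingleton_of_injective _ T.X₂ n) (hext (n + 1))
    obtain ⟨s, hs⟩ := exists_section_of_section_compRight S hQ hσ
    exact module_injective_of_exact_of_section hI' hT.moduleCat_injective_f
      ((ShortComplex.ShortExact.moduleCat_exact_iff_function_exact T).mp hT.exact) hs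

end Cosyzygy

theorem injective_of_finite_injective_dimension_general
    (R : Type u) [CommRing R] (S : Type u) [Ring S] [Algebra R S] [Module.FaithfullyFlat R S]
    (N : Type u) [AddCommGroup N] [Module R N]
    (hfid : ∃ i : ℕ, injResBddAbove R (ModuleCat.of R N) (i : ℤ))
    (hinj : Module.Injective R (S →ₗ[R] N))
    (hext : ∀ n : ℕ, 0 < n → Subsingleton (extmod R S N n)) :
    Module.Injective R N := by
  obtain ⟨d, I, hI⟩ := hfid
  have hdim : HasInjectiveDimensionLE (ModuleCat.of R N) d :=
    hasInjectiveDimensionLT_of_injectiveResolution I fun m hm ↦ hI m (by exact_mod_cast hm)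
  refine module_injective_of_hasInjectiveDimensionLE S d (ModuleCat.of R N) hdim hinj fun n ↦ ?_
  have := hext (n + 1) n.succ_pos
  exact subsingleton_ext_succ_of_isZero R (ModuleCat.isZero_of_subsingleton (extmod R S N (n + 1)))

/-- Let `R` be a commutative noetherian ring, `S` a faithfully flat (commutative)
`R`-algebra, and `N` an `R`-module of finite injective dimension.  If `Hom_R(S,N)` is an
injective `R`-module and `Ext_R^n(S,N) = 0` for all `n > 0`, then `N` is an injective
`R`-module. -/
theorem injective_of_finite_injective_dimension
    (R : Type u) [CommRing R] [IsNoetherianRing R]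
    (S : Type u) [CommRing S] [Algebra R S] [Module.FaithfullyFlat R S]
    (N : Type u) [AddCommGroup N] [Module R N]
    (hfid : ∃ i : ℕ, injResBddAbove R (ModuleCat.of R N) (i : ℤ))
    (hinj : Module.Injective R (S →ₗ[R] N))
    (hext : ∀ n : ℕ, 0 < n → Subsingleton (extmod R S N n)) :
    Module.Injective R N :=
  injective_of_finite_injective_dimension_general R S N hfid hinj hext
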